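/- arXiv:2306.02173 — 4 statements merged into one kernel-verified Lean document; each statement's English description precedes it below -/
import Mathlib

section
/- Let F be the case (I) vector field F(φ₁,φ₂) = (ω + a·cos φ₁ − κ·sin(φ₁−φ₂), ω + a·cos φ₂ + κ·sin(φ₂−φ₁)) with a ≠ 0. If (φ₁,φ₂) ∈ ℝ² is an equilibrium, i.e. F(φ₁,φ₂) = (0,0), then cos φ₁ = cos φ₂; consequently every equilibrium lies either in the synchrony subspace (φ₁ ≡ φ₂ mod 2π) or in the reversibility subspace Fix R (φ₁ ≡ −φ₂ mod 2π). -/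
open Real

/-- The case (I) vector field: two identical active rotators with
anti-reciprocal Kuramoto-type coupling. -/
noncomputable def caseI (ω a κ : ℝ) : ℝ × ℝ → ℝ × ℝ := fun p =>
  (ω + a * Real.cos p.1 - κ * Real.sin (p.1 - p.2),
   ω + a * Real.cos p.2 + κ * Real.sin (p.2 - p.1))

/-- for `a ≠ 0`, every equilibrium of the case (I) system
satisfies `cos φ₁ = cos φ₂` and hence lies in the synchrony subspace
(`φ₁ ≡ φ₂ mod 2π`) or in the reversibility subspace `Fix R`
(`φ₁ ≡ -φ₂ mod 2π`). -/
theorem stmt_6 (ω a κ : ℝ) (ha : a ≠ 0) (p : ℝ × ℝ)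
    (heq : caseI ω a κ p = 0) :
    Real.cos p.1 = Real.cos p.2 ∧
      ((∃ k : ℤ, p.1 = p.2 + 2 * π * k) ∨ (∃ k : ℤ, p.1 = -p.2 + 2 * π * k)) := by
  have h1 := congrArg Prod.fst heq
  have h2 := congrArg Prod.snd heq
  simp only [caseI, Prod.fst_zero, Prod.snd_zero] at h1 h2
  rw [← neg_sub p.1 p.2, Real.sin_neg] at h2
  have hc : Real.cos p.1 = Real.cos p.2 := mul_left_cancel₀ ha (by linarith)
  refine ⟨hc, ?_⟩
  obtain ⟨k, h | h⟩ := Real.cos_eq_cos_iff.1 hc.symm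
  · exact Or.inl ⟨k, by linarith⟩
  · exact Or.inr ⟨k, by linarith⟩
end

section
/- Let G be the case (II) vector field G(φ₁,φ₂) = (ω + a·cos φ₁ − κ·cos(φ₁−φ₂), ω + a·cos φ₂ − κ·cos(φ₂−φ₁)) with a ≠ 0. If (φ₁,φ₂) ∈ ℝ² is an equilibrium, i.e. G(φ₁,φ₂) = (0,0), then cos φ₁ = cos φ₂; consequently every equilibrium lies either in the synchrony subspace (φ₁ ≡ φ₂ mod 2π) or in the reversibility subspace Fix R (φ₁ ≡ −φ₂ mod 2π). -/
open Real

/-- The case (II) vector field: two identical active rotators with reciprocal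
even Kuramoto-type coupling. -/
noncomputable def caseII (ω a κ : ℝ) : ℝ × ℝ → ℝ × ℝ := fun p =>
  (ω + a * Real.cos p.1 - κ * Real.cos (p.1 - p.2),
   ω + a * Real.cos p.2 - κ * Real.cos (p.2 - p.1))

/-- for `a ≠ 0`, every equilibrium of the case (II) system
satisfies `cos φ₁ = cos φ₂` and hence lies in the synchrony subspace
(`φ₁ ≡ φ₂ mod 2π`) or in the reversibility subspace `Fix R`
(`φ₁ ≡ -φ₂ mod 2π`). -/
theorem stmt_15 (ω a κ : ℝ) (ha : a ≠ 0) (p : ℝ × ℝ)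
    (heq : caseII ω a κ p = 0) :
    Real.cos p.1 = Real.cos p.2 ∧
      ((∃ k : ℤ, p.1 = p.2 + 2 * π * k) ∨ (∃ k : ℤ, p.1 = -p.2 + 2 * π * k)) := by
  have h1 : ω + a * Real.cos p.1 - κ * Real.cos (p.1 - p.2) = 0 := congrArg Prod.fst heq
  have h2 : ω + a * Real.cos p.2 - κ * Real.cos (p.2 - p.1) = 0 := congrArg Prod.snd heq
  have h3 : Real.cos (p.2 - p.1) = Real.cos (p.1 - p.2) := by
    rw [← Real.cos_neg, neg_sub]
  rw [h3] at h2
  have hc : Real.cos p.1 = Real.cos p.2 := mul_left_cancel₀ ha (by linarith)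
  refine ⟨hc, ?_⟩
  obtain ⟨k, hk | hk⟩ := Real.cos_eq_cos_iff.1 hc.symm
  · exact Or.inl ⟨k, by rw [hk]; ring⟩
  · exact Or.inr ⟨k, by rw [hk]; ring⟩
end

section
/- Let G be the case (II) vector field G(φ₁,φ₂) = (ω + a·cos φ₁ − κ·cos(φ₁−φ₂), ω + a·cos φ₂ − κ·cos(φ₂−φ₁)). The point (0,0) is an equilibrium of G if and only if ω + a = κ, and the point (π,π) is an equilibrium of G if and only if ω − a = κ; in both cases the Jacobian matrix of G at that point is the zero 2×2 matrix, so the linearization has a geometrically double zero eigenvalue. These are the degenerate equilibria of the reversible equivariant sink/source bifurcation occurring along the lines ω ± a = κ, located in Fix R ∩ Fix γ_m = {(0,0),(π,π)} (mod 2π). -/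
open Real

/-- The Jacobian matrix of a planar vector field at a point. -/
noncomputable def jac (F : ℝ × ℝ → ℝ × ℝ) (p : ℝ × ℝ) : Matrix (Fin 2) (Fin 2) ℝ :=
  !![(fderiv ℝ F p (1, 0)).1, (fderiv ℝ F p (0, 1)).1;
     (fderiv ℝ F p (1, 0)).2, (fderiv ℝ F p (0, 1)).2]

theorem caseII_fderiv_zero (ω a κ x : ℝ) (hx : Real.sin x = 0) :
    fderiv ℝ (caseII ω a κ) (x, x) = 0 := by
  apply HasFDerivAt.fderiv
  have h1 : HasFDerivAt (fun p : ℝ × ℝ => p.1) (ContinuousLinearMap.fst ℝ ℝ ℝ) (x, x) :=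
    hasFDerivAt_fst
  have h2 : HasFDerivAt (fun p : ℝ × ℝ => p.2) (ContinuousLinearMap.snd ℝ ℝ ℝ) (x, x) :=
    hasFDerivAt_snd
  have A := ((h1.cos.const_mul a).const_add ω).sub ((h1.sub h2).cos.const_mul κ)
  have B := ((h2.cos.const_mul a).const_add ω).sub ((h2.sub h1).cos.const_mul κ)
  have C := A.prodMk B
  refine HasFDerivAt.congr_fderiv C ?_
  ext <;> simp [hx]

/-- `(0,0)` is an equilibrium of the case (II) system iff
`ω + a = κ`, and `(π,π)` is an equilibrium iff `ω - a = κ`; in both cases the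
Jacobian is the zero matrix (geometrically double zero eigenvalue). These are
the degenerate equilibria of the reversible equivariant sink/source
bifurcation along `ω ± a = κ`, located in `Fix R ∩ Fix γ_m`. -/
theorem stmt_17 (ω a κ : ℝ) :
    (caseII ω a κ (0, 0) = 0 ↔ ω + a = κ) ∧
    (caseII ω a κ (π, π) = 0 ↔ ω - a = κ) ∧
    (ω + a = κ → jac (caseII ω a κ) (0, 0) = 0) ∧
    (ω - a = κ → jac (caseII ω a κ) (π, π) = 0) := by
  refine ⟨?_, ?_, fun _ => ?_, fun _ => ?_⟩
  · simp [caseII, Prod.ext_iff, sub_eq_zero]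
  · simp [caseII, Prod.ext_iff, sub_eq_zero, ← sub_eq_add_neg]
  · ext i j
    fin_cases i <;> fin_cases j <;> simp [jac, caseII_fderiv_zero ω a κ 0 Real.sin_zero]
  · ext i j
    fin_cases i <;> fin_cases j <;> simp [jac, caseII_fderiv_zero ω a κ π Real.sin_pi]
end

section
/- Let G be the case (II) vector field G(φ₁,φ₂) = (ω + 1·cos φ₁ − κ·cos(φ₁−φ₂), ω + 1·cos φ₂ − κ·cos(φ₂−φ₁)) with a = 1. Suppose κ ∈ ℝ satisfies |κ| > 1/4 and ω = −1/(8κ) − κ, and let φ* ∈ ℝ satisfy cos φ* = 1/(4κ) with sin φ* ≠ 0. Then (φ*, −φ*) is an equilibrium of G lying in Fix R whose Jacobian matrix has zero trace and zero determinant (a double zero eigenvalue). Thus the curve ω = −1/(8κ) − κ, |κ| > 1/4, is the saddle-center bifurcation curve of the case (II) system with a = 1. -/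
open Real

/-- on the saddle-center bifurcation curve
`ω = -1/(8κ) - κ`, `|κ| > 1/4`, of the case (II) system with `a = 1`, the
point `(φ*, -φ*)` with `cos φ* = 1/(4κ)`, `sin φ* ≠ 0` is an equilibrium in
`Fix R` whose Jacobian has zero trace and zero determinant (a double zero
eigenvalue). -/
theorem stmt_18 (ω κ φs : ℝ) (hκ : 1 / 4 < |κ|)
    (hω : ω = -1 / (8 * κ) - κ)
    (hcos : Real.cos φs = 1 / (4 * κ)) (hsin : Real.sin φs ≠ 0) :
    caseII ω 1 κ (φs, -φs) = 0 ∧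
    Matrix.trace (jac (caseII ω 1 κ) (φs, -φs)) = 0 ∧
    Matrix.det (jac (caseII ω 1 κ) (φs, -φs)) = 0 := by
  have hk : κ ≠ 0 := by
    rintro rfl
    norm_num at hκ
  have hck : κ * Real.cos φs = 1 / 4 := by
    rw [hcos]; field_simp
  have h1 : HasFDerivAt (fun p : ℝ × ℝ => p.1) (ContinuousLinearMap.fst ℝ ℝ ℝ) (φs, -φs) :=
    hasFDerivAt_fst
  have h2 : HasFDerivAt (fun p : ℝ × ℝ => p.2) (ContinuousLinearMap.snd ℝ ℝ ℝ) (φs, -φs) :=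
    hasFDerivAt_snd
  have hfd := HasFDerivAt.prodMk
    (((h1.cos.const_mul 1).const_add ω).sub ((h1.sub h2).cos.const_mul κ))
    (((h2.cos.const_mul 1).const_add ω).sub ((h2.sub h1).cos.const_mul κ))
  have hfd' : fderiv ℝ (caseII ω 1 κ) (φs, -φs) = _ := hfd.fderiv
  have e1 : φs - -φs = 2 * φs := by ring
  have e2 : -φs - φs = -(2 * φs) := by ring
  have hs2 : κ * Real.sin (2 * φs) = Real.sin φs / 2 := by
    rw [Real.sin_two_mul]; linear_combination 2 * Real.sin φs * hck
  have hc2 : ω + Real.cos φs - κ * Real.cos (2 * φs) = 0 := by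
    rw [Real.cos_two_mul, hω, hcos]; field_simp; ring
  refine ⟨?_, ?_, ?_⟩
  · simp only [caseII, e1, e2, Real.cos_neg, one_mul, hc2]
    rfl
  · simp [jac, hfd', Matrix.trace_fin_two, e1, e2]
  · simp [jac, hfd', Matrix.det_fin_two, e1, e2]
    linear_combination 2 * Real.sin φs * hs2
end
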